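/- Let φ = (1+√5)/2 and let B be the 3×3 matrix with rows (−1, 1, 1), (1, φ⁻², φ²), (1, φ², φ⁻²). Then B maps the cone 𝒬₀ bijectively onto the cone 𝒬: for (x,y,z) = B·(u,v,w) one has the identity x² + y² + z² − 2(xy + yz + zx) = 5(u² − 4vw), and (x,y,z) ∈ 𝒬 if and only if (u,v,w) ∈ 𝒬₀. Consequently, for every ξ ∈ ℝ with ξ ≠ −φ⁻¹ and ξ ≠ φ, the matrix M(ξ, −ξ, 2−ξ) maps 𝒬 onto 𝒬: M(ξ, −ξ, 2−ξ)·𝒬 = 𝒬. -/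

import Mathlib

/-!
Read `(u, v, w)` as the binary quadratic form `f(X, Y) = v X² + u X Y + w Y²`, so that `𝒬₀` is the
cone of positive definite forms. With `ψ = -φ⁻¹` the conjugate of `φ`, the coordinates of
`B (u, v, w)` are the values of `f` at `(ψ, -φ) + (φ, -ψ) = (1, -1)`, at `(ψ, -φ)` and at `(φ, -ψ)`.
For vectors `p` and `q`, the values `x, y, z` of `f` at `p + q, p, q` satisfy
`x² + y² + z² - 2(xy + yz + zx) = det(p, q)² · disc f`, and here `det(p, q)² = (φ² - ψ²)² = 5`.
A form of negative discriminant has a constant sign off the origin, so it is positive definite as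
soon as one of its values is positive; hence `B⁻¹ 𝒬 = 𝒬₀`, and `B 𝒬₀ = 𝒬` because `B` is invertible.

The substitution `(X, Y) ↦ (cX, dY)` acts on forms as `D = diag(cd, c², d²)` and, for `c, d ≠ 0`,
maps `𝒬₀` onto itself. Since `M(ξ, -ξ, 2 - ξ) B = B D` with `c = ξ - φ` and `d = ξ - ψ`, the matrix
`M(ξ, -ξ, 2 - ξ)` maps `𝒬 = B 𝒬₀` onto itself.
-/

/-- The open cone: the interior, in the first octant, of the cone
`x² + y² + z² = 2(xy + yz + zx)`, as a set of vectors in `Fin 3 → ℝ`. -/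
def Q : Set (Fin 3 → ℝ) :=
  {v | 0 < v 0 ∧ 0 < v 1 ∧ 0 < v 2 ∧
    (v 0) ^ 2 + (v 1) ^ 2 + (v 2) ^ 2 <
      2 * (v 0 * v 1 + v 1 * v 2 + v 2 * v 0)}

/-- The auxiliary cone `𝒬₀`. -/
def Q0 : Set (Fin 3 → ℝ) :=
  {v | 0 < v 1 ∧ 0 < v 2 ∧ (v 0) ^ 2 < 4 * (v 1 * v 2)}

/-- The matrix `M(ρ, σ, τ)`. -/
def M (ρ σ τ : ℝ) : Matrix (Fin 3) (Fin 3) ℝ :=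
  !![ρ * (ρ - 1), ρ, 1 - ρ;
     1 - σ, σ * (σ - 1), σ;
     τ, 1 - τ, τ * (τ - 1)]

/-- The golden ratio. -/
noncomputable def phi : ℝ := (1 + Real.sqrt 5) / 2

/-- The diagonalizing matrix `B`. -/
noncomputable def B : Matrix (Fin 3) (Fin 3) ℝ :=
  !![-1, 1, 1;
     1, (phi ^ 2)⁻¹, phi ^ 2;
     1, phi ^ 2, (phi ^ 2)⁻¹]

section BinaryForm

variable {R : Type*} [CommRing R]

/-- The binary quadratic form `v X² + u X Y + w Y²` with coefficient vector `(u, v, w)`; the middle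
coefficient comes first, following the coordinates of `Q0`. -/
def binaryForm (u : Fin 3 → R) (X Y : R) : R :=
  u 1 * X ^ 2 + u 0 * X * Y + u 2 * Y ^ 2

lemma binaryForm_add_quadratic_identity (u : Fin 3 → R) (X Y X' Y' : R) :
    binaryForm u (X + X') (Y + Y') ^ 2 + binaryForm u X Y ^ 2 + binaryForm u X' Y' ^ 2 -
        2 * (binaryForm u (X + X') (Y + Y') * binaryForm u X Y +
          binaryForm u X Y * binaryForm u X' Y' +
          binaryForm u X' Y' * binaryForm u (X + X') (Y + Y')) =
      (X * Y' - X' * Y) ^ 2 * discrim (u 1) (u 0) (u 2) := by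
  simp only [binaryForm, discrim]
  ring

lemma four_mul_mul_binaryForm (u : Fin 3 → R) (X Y : R) :
    4 * (u 1 * binaryForm u X Y) =
      (2 * u 1 * X + u 0 * Y) ^ 2 - discrim (u 1) (u 0) (u 2) * Y ^ 2 := by
  simp only [binaryForm, discrim]
  ring

lemma mul_binaryForm_pos_of_discrim_neg [LinearOrder R] [IsStrictOrderedRing R] {u : Fin 3 → R}
    {X Y : R} (hdisc : discrim (u 1) (u 0) (u 2) < 0) (hXY : X ≠ 0 ∨ Y ≠ 0) :
    0 < u 1 * binaryForm u X Y := by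
  by_cases hY : Y = 0
  · have hX : X ≠ 0 := hXY.resolve_right (not_not_intro hY)
    have hu : u 1 ≠ 0 := by
      intro h
      simp only [discrim, h, mul_zero, zero_mul, sub_zero] at hdisc
      exact hdisc.not_ge (sq_nonneg (u 0))
    calc 0 < (u 1 * X) ^ 2 := by positivity
      _ = u 1 * binaryForm u X Y := by simp only [binaryForm, hY]; ring
  · have hdiscY : discrim (u 1) (u 0) (u 2) * Y ^ 2 < 0 :=
      mul_neg_of_neg_of_pos hdisc (by positivity)
    linarith [four_mul_mul_binaryForm u X Y, sq_nonneg (2 * u 1 * X + u 0 * Y)]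

end BinaryForm

lemma mem_Q0_iff_discrim_neg_and_binaryForm_pos {u : Fin 3 → ℝ} {X Y : ℝ} (hXY : X ≠ 0 ∨ Y ≠ 0) :
    u ∈ Q0 ↔ discrim (u 1) (u 0) (u 2) < 0 ∧ 0 < binaryForm u X Y := by
  have hcone : u 0 ^ 2 < 4 * (u 1 * u 2) ↔ discrim (u 1) (u 0) (u 2) < 0 := by
    rw [discrim, sub_neg, mul_assoc]
  simp only [Q0, Set.mem_ofPred_eq, hcone]
  constructor
  · rintro ⟨hv, -, hdisc⟩
    exact ⟨hdisc, pos_of_mul_pos_right (mul_binaryForm_pos_of_discrim_neg hdisc hXY) hv.le⟩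
  · rintro ⟨hdisc, hf⟩
    have hv : 0 < u 1 := pos_of_mul_pos_left (mul_binaryForm_pos_of_discrim_neg hdisc hXY) hf.le
    have hvw : 0 < u 1 * u 2 := by
      simpa [binaryForm] using
        mul_binaryForm_pos_of_discrim_neg (X := 0) (Y := 1) hdisc (.inr one_ne_zero)
    exact ⟨hv, pos_of_mul_pos_right hvw hv.le, hdisc⟩

section Cones

open Matrix Real goldenRatio

lemma mulVec_image_eq_of_mem_iff {n R : Type*} [Fintype n] [DecidableEq n] [CommRing R]
    {A : Matrix n n R} {S T : Set (n → R)} (hA : IsUnit A) (h : ∀ u, A *ᵥ u ∈ T ↔ u ∈ S) :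
    A.mulVec '' S = T := by
  have hS : S = A.mulVec ⁻¹' T := Set.ext fun u => (h u).symm
  rw [hS, Set.image_preimage_eq T (mulVec_surjective_iff_isUnit.2 hA)]

lemma diagonal_image_Q0 {c d : ℝ} (hc : c ≠ 0) (hd : d ≠ 0) :
    (diagonal ![c * d, c ^ 2, d ^ 2]).mulVec '' Q0 = Q0 := by
  have hD : IsUnit (diagonal ![c * d, c ^ 2, d ^ 2]) := by
    simp [isUnit_iff_isUnit_det, Fin.prod_univ_three, hc, hd]
  refine mulVec_image_eq_of_mem_iff hD fun u => ?_
  have hcone : (c * d * u 0) ^ 2 < 4 * (c ^ 2 * u 1 * (d ^ 2 * u 2)) ↔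
      u 0 ^ 2 < 4 * (u 1 * u 2) := by
    calc (c * d * u 0) ^ 2 < 4 * (c ^ 2 * u 1 * (d ^ 2 * u 2))
        ↔ (c * d) ^ 2 * u 0 ^ 2 < (c * d) ^ 2 * (4 * (u 1 * u 2)) := by ring_nf
      _ ↔ u 0 ^ 2 < 4 * (u 1 * u 2) := mul_lt_mul_iff_right₀ (by positivity)
  have hv : 0 < c ^ 2 * u 1 ↔ 0 < u 1 := mul_pos_iff_of_pos_left (by positivity)
  have hw : 0 < d ^ 2 * u 2 ↔ 0 < u 2 := mul_pos_iff_of_pos_left (by positivity)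
  simp only [Q0, Set.mem_ofPred_eq, mulVec_diagonal, cons_val, hv, hw, hcone]

lemma phi_eq_goldenRatio : phi = φ := rfl

lemma B_eq_goldenConj : B = !![-1, 1, 1; 1, ψ ^ 2, φ ^ 2; 1, φ ^ 2, ψ ^ 2] := by
  simp only [B, phi_eq_goldenRatio, ← inv_pow, inv_goldenRatio, neg_sq]

lemma B_mulVec_eq_binaryForm (u : Fin 3 → ℝ) :
    B *ᵥ u = ![binaryForm u 1 (-1), binaryForm u ψ (-φ), binaryForm u φ (-ψ)] := by
  have h := goldenRatio_mul_goldenConj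
  rw [B_eq_goldenConj]
  ext i
  fin_cases i <;>
    simp only [binaryForm, mulVec, dotProduct, Fin.sum_univ_three, of_apply, cons_val,
      Fin.zero_eta, Fin.mk_one, Fin.reduceFinMk]
  · ring
  · linear_combination u 0 * h
  · linear_combination u 0 * h

lemma B_mulVec_quadratic_identity (u : Fin 3 → ℝ) :
    (B *ᵥ u) 0 ^ 2 + (B *ᵥ u) 1 ^ 2 + (B *ᵥ u) 2 ^ 2 -
        2 * ((B *ᵥ u) 0 * (B *ᵥ u) 1 + (B *ᵥ u) 1 * (B *ᵥ u) 2 + (B *ᵥ u) 2 * (B *ᵥ u) 0) =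
      5 * (u 0 ^ 2 - 4 * (u 1 * u 2)) := by
  have hX : ψ + φ = 1 := by rw [add_comm, goldenRatio_add_goldenConj]
  have hY : -φ + -ψ = -1 := by rw [← neg_add, goldenRatio_add_goldenConj]
  have hdet : (ψ * -ψ - φ * -φ) ^ 2 = 5 := by
    calc (ψ * -ψ - φ * -φ) ^ 2 = ((φ - ψ) * (φ + ψ)) ^ 2 := by ring
      _ = 5 := by
        rw [goldenRatio_add_goldenConj, goldenRatio_sub_goldenConj, mul_one,
          sq_sqrt (by norm_num)]
  have h := binaryForm_add_quadratic_identity u ψ (-φ) φ (-ψ)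
  rw [hX, hY, hdet, discrim, mul_assoc 4] at h
  simpa only [B_mulVec_eq_binaryForm, cons_val] using h

lemma B_mulVec_mem_Q_iff (u : Fin 3 → ℝ) : B *ᵥ u ∈ Q ↔ u ∈ Q0 := by
  have hcone : (B *ᵥ u) 0 ^ 2 + (B *ᵥ u) 1 ^ 2 + (B *ᵥ u) 2 ^ 2 <
      2 * ((B *ᵥ u) 0 * (B *ᵥ u) 1 + (B *ᵥ u) 1 * (B *ᵥ u) 2 + (B *ᵥ u) 2 * (B *ᵥ u) 0) ↔
      discrim (u 1) (u 0) (u 2) < 0 := by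
    rw [← sub_neg, B_mulVec_quadratic_identity, discrim, mul_assoc 4]
    constructor <;> intro h <;> linarith
  have hx := mem_Q0_iff_discrim_neg_and_binaryForm_pos (u := u) (X := 1) (Y := -1)
    (.inl one_ne_zero)
  have hy := mem_Q0_iff_discrim_neg_and_binaryForm_pos (u := u) (X := ψ) (Y := -φ)
    (.inl goldenConj_ne_zero)
  have hz := mem_Q0_iff_discrim_neg_and_binaryForm_pos (u := u) (X := φ) (Y := -ψ)
    (.inl goldenRatio_ne_zero)
  simp only [Q, Set.mem_ofPred_eq, hcone]
  simp only [B_mulVec_eq_binaryForm, cons_val]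
  tauto

lemma det_B : B.det = 5 * √5 := by
  calc B.det = (φ - ψ) * (φ + ψ) * ((φ + ψ) ^ 2 - 2 * (φ * ψ) + 2) := by
        rw [B_eq_goldenConj, det_fin_three]
        simp only [of_apply, cons_val]
        ring
    _ = 5 * √5 := by
        rw [goldenRatio_sub_goldenConj, goldenRatio_add_goldenConj, goldenRatio_mul_goldenConj]
        ring

lemma B_image_Q0 : B.mulVec '' Q0 = Q := by
  have hB : IsUnit B := by
    rw [isUnit_iff_isUnit_det, det_B, isUnit_iff_ne_zero]
    positivity
  exact mulVec_image_eq_of_mem_iff hB B_mulVec_mem_Q_iff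

lemma M_mul_B (ξ : ℝ) :
    M ξ (-ξ) (2 - ξ) * B =
      B * diagonal ![(ξ - φ) * (ξ - ψ), (ξ - φ) ^ 2, (ξ - ψ) ^ 2] := by
  have hφ := goldenRatio_sq
  rw [B_eq_goldenConj, ← one_sub_goldenConj]
  ext i j
  rw [mul_diagonal, mul_apply, Fin.sum_univ_three]
  generalize φ = p at hφ ⊢
  fin_cases i <;> fin_cases j <;>
    simp only [M, of_apply, cons_val, Fin.zero_eta, Fin.mk_one, Fin.reduceFinMk] <;>
    grind

lemma M_image_Q {ξ : ℝ} (hψ : ξ ≠ ψ) (hφ : ξ ≠ φ) : (M ξ (-ξ) (2 - ξ)).mulVec '' Q = Q := by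
  set D : Matrix (Fin 3) (Fin 3) ℝ := diagonal ![(ξ - φ) * (ξ - ψ), (ξ - φ) ^ 2, (ξ - ψ) ^ 2]
  calc (M ξ (-ξ) (2 - ξ)).mulVec '' Q
      = (M ξ (-ξ) (2 - ξ)).mulVec '' (B.mulVec '' Q0) := by rw [B_image_Q0]
    _ = (M ξ (-ξ) (2 - ξ) * B).mulVec '' Q0 := by simp only [Set.image_image, mulVec_mulVec]
    _ = (B * D).mulVec '' Q0 := by rw [M_mul_B]
    _ = B.mulVec '' (D.mulVec '' Q0) := by simp only [Set.image_image, mulVec_mulVec]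
    _ = Q := by rw [diagonal_image_Q0 (sub_ne_zero.2 hφ) (sub_ne_zero.2 hψ), B_image_Q0]

end Cones

theorem B_maps_cone_and_M_preserves_cone :
    (∀ u : Fin 3 → ℝ,
        (B.mulVec u 0) ^ 2 + (B.mulVec u 1) ^ 2 + (B.mulVec u 2) ^ 2 -
            2 * (B.mulVec u 0 * B.mulVec u 1 + B.mulVec u 1 * B.mulVec u 2 +
              B.mulVec u 2 * B.mulVec u 0) =
          5 * ((u 0) ^ 2 - 4 * (u 1 * u 2))) ∧
      (∀ u : Fin 3 → ℝ, B.mulVec u ∈ Q ↔ u ∈ Q0) ∧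
      B.mulVec '' Q0 = Q ∧
      (∀ ξ : ℝ, ξ ≠ -phi⁻¹ → ξ ≠ phi →
        (M ξ (-ξ) (2 - ξ)).mulVec '' Q = Q) := by
  refine ⟨B_mulVec_quadratic_identity, B_mulVec_mem_Q_iff, B_image_Q0, fun ξ hψ hφ => ?_⟩
  rw [phi_eq_goldenRatio, Real.inv_goldenRatio, neg_neg] at hψ
  exact M_image_Q hψ hφ
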